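/- Assume l0 ≠ 0 and m0 ≠ 0, and that for every b ∈ ℝ² the largest eigenvalue λ(b) of R(b) is simple. Then each entry g_{pq} of the ALS calibration matrix G(b) = λ(b)·P(b) is doubly periodic and effectively one-dimensional: g_{pq}(u + j/l0, v + k/m0) = g_{pq}(u, v) for all integers j, k and all real u, v, and g_{pq}(u, −(l0/m0)u + c) = g_{pq}(0, c) for all real u, c. (Proposition 2, periodicity part.) -/

import Mathlib

/-- The extrapolated visibility matrix `R(b)` of a regularly-spaced array. -/
noncomputable def Rmat (n : ℕ) (φ : Fin n → ℤ) (A1 A2 l0 m0 : ℝ) (b : ℝ × ℝ) :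
    Matrix (Fin n) (Fin n) ℂ :=
  Matrix.of fun p q =>
    (A1 : ℂ) + (A2 : ℂ) *
      Complex.exp (-2 * (Real.pi : ℂ) * Complex.I * ((φ q - φ p : ℤ) : ℂ) *
        ((b.1 * l0 + b.2 * m0 : ℝ) : ℂ))

/-- The largest (real) eigenvalue of a complex matrix. -/
noncomputable def largestEig {n : ℕ} (A : Matrix (Fin n) (Fin n) ℂ) : ℝ :=
  sSup {x : ℝ | (x : ℂ) ∈ spectrum ℂ A}

/-- The eigenspace of a complex matrix for the eigenvalue `μ`. -/
noncomputable def eigSpace {n : ℕ} (A : Matrix (Fin n) (Fin n) ℂ) (μ : ℂ) :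
    Submodule ℂ (Fin n → ℂ) :=
  Module.End.eigenspace (Matrix.toLin' A) μ

/-!
The baseline `b` enters `R(b)` only through the phase `b · s0` modulo `1`, because the antenna
positions are integers. A self-adjoint idempotent is determined by its range, so `G(b)` is
determined by `R(b)`, hence by that phase class. Translating `b` by `(j / l0, k / m0)` shifts the
phase by the integer `j + k`, and moving `b` along a line of slope `-l0 / m0` leaves it unchanged.
-/

theorem eq_of_isSelfAdjoint_of_mul_eq_right {S : Type*} [Mul S] [StarMul S] {p q : S}
    (hp : IsSelfAdjoint p) (hq : IsSelfAdjoint q) (hpq : p * q = q) (hqp : q * p = p) : p = q :=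
  calc
    p = star (q * p) := by rw [hqp, hp.star_eq]
    _ = p * q := by rw [star_mul, hp.star_eq, hq.star_eq]
    _ = q := hpq

section StarProjection

variable {ι R : Type*} [Fintype ι] [DecidableEq ι] [CommSemiring R]

theorem mul_eq_right_iff_range_toLin'_le {ι' : Type*} [Fintype ι'] [DecidableEq ι']
    {P : Matrix ι ι R} (hP : IsIdempotentElem P) (Q : Matrix ι ι' R) :
    P * Q = Q ↔ LinearMap.range (Matrix.toLin' Q) ≤ LinearMap.range (Matrix.toLin' P) := by
  have hP' : IsIdempotentElem (Matrix.toLin' P) := hP.map Matrix.toLinAlgEquiv'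
  rw [← LinearMap.IsIdempotentElem.comp_eq_right_iff hP', ← Matrix.toLin'_mul,
    Matrix.toLin'.injective.eq_iff]

theorem eq_of_isStarProjection_of_range_toLin'_eq [StarRing R] {P Q : Matrix ι ι R}
    (hP : IsStarProjection P) (hQ : IsStarProjection Q)
    (h : LinearMap.range (Matrix.toLin' P) = LinearMap.range (Matrix.toLin' Q)) : P = Q :=
  eq_of_isSelfAdjoint_of_mul_eq_right hP.isSelfAdjoint hQ.isSelfAdjoint
    ((mul_eq_right_iff_range_toLin'_le hP.isIdempotentElem Q).2 h.ge)
    ((mul_eq_right_iff_range_toLin'_le hQ.isIdempotentElem P).2 h.le)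

end StarProjection

/-- `G` is the ALS calibration matrix `λ • P` of `A`, where `λ` is the largest eigenvalue of `A`
and `P` the orthogonal projection onto its eigenspace. It is a predicate, with `P` a Hermitian
idempotent matrix, so that no projection has to be constructed. -/
def IsALSMatrix {n : ℕ} (A G : Matrix (Fin n) (Fin n) ℂ) : Prop :=
  ∃ P : Matrix (Fin n) (Fin n) ℂ, IsStarProjection P ∧
    LinearMap.range (Matrix.toLin' P) = eigSpace A (largestEig A) ∧ G = (largestEig A : ℂ) • P

theorem IsALSMatrix.unique {n : ℕ} {A G G' : Matrix (Fin n) (Fin n) ℂ}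
    (hG : IsALSMatrix A G) (hG' : IsALSMatrix A G') : G = G' := by
  obtain ⟨P, hP, hPrange, rfl⟩ := hG
  obtain ⟨P', hP', hP'range, rfl⟩ := hG'
  rw [eq_of_isStarProjection_of_range_toLin'_eq hP hP' (hPrange.trans hP'range.symm)]

/-- The phase `b · s0`, in turns, of the source at `s0 = (l0, m0)` seen on the baseline `b`. The
product `ℝ × ℝ` carries no inner product in Mathlib, so the dot product is written out. -/
def sourcePhase (l0 m0 : ℝ) (b : ℝ × ℝ) : ℝ :=
  b.1 * l0 + b.2 * m0

theorem sourcePhase_add_int_div_modEq {l0 m0 : ℝ} (hl0 : l0 ≠ 0) (hm0 : m0 ≠ 0)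
    (u v : ℝ) (j k : ℤ) :
    sourcePhase l0 m0 (u + j / l0, v + k / m0) ≡ sourcePhase l0 m0 (u, v) [PMOD 1] := by
  have hshift : sourcePhase l0 m0 (u + j / l0, v + k / m0) =
      sourcePhase l0 m0 (u, v) + (j + k : ℤ) • (1 : ℝ) := by
    simp only [sourcePhase, zsmul_eq_mul, Int.cast_add]
    field_simp
    ring
  rw [hshift]
  exact AddCommGroup.add_zsmul_modEq _

theorem sourcePhase_neg_slope_mul_add (l0 : ℝ) {m0 : ℝ} (hm0 : m0 ≠ 0) (u c : ℝ) :
    sourcePhase l0 m0 (u, -(l0 / m0) * u + c) = sourcePhase l0 m0 (0, c) := by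
  simp only [sourcePhase]
  field_simp
  ring

theorem exp_two_pi_I_int_mul_eq_of_modEq (k : ℤ) {x y : ℂ} (h : x ≡ y [PMOD 1]) :
    Complex.exp (2 * Real.pi * Complex.I * k * x) =
      Complex.exp (2 * Real.pi * Complex.I * k * y) := by
  obtain ⟨N, hN⟩ := AddCommGroup.modEq_iff_eq_add_zsmul.1 h
  rw [Complex.exp_eq_exp_iff_exists_int]
  refine ⟨-(k * N), ?_⟩
  rw [hN]
  push_cast [zsmul_eq_mul]
  ring

theorem Rmat_eq_of_sourcePhase_modEq {n : ℕ} (φ : Fin n → ℤ) (A1 A2 : ℝ) {l0 m0 : ℝ}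
    {b b' : ℝ × ℝ} (h : sourcePhase l0 m0 b ≡ sourcePhase l0 m0 b' [PMOD 1]) :
    Rmat n φ A1 A2 l0 m0 b = Rmat n φ A1 A2 l0 m0 b' := by
  ext p q
  have hphase : (sourcePhase l0 m0 b : ℂ) ≡ sourcePhase l0 m0 b' [PMOD 1] := by
    simpa using h.map Complex.ofRealHom
  have hexp := exp_two_pi_I_int_mul_eq_of_modEq (φ p - φ q) hphase
  have hexponent (x : ℂ) : -2 * (Real.pi : ℂ) * Complex.I * ((φ q - φ p : ℤ) : ℂ) * x =
      2 * Real.pi * Complex.I * ((φ p - φ q : ℤ) : ℂ) * x := by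
    push_cast
    ring
  simp only [Rmat, Matrix.of_apply, hexponent]
  exact congrArg (fun z : ℂ => A1 + A2 * z) hexp

theorem ALS_entries_periodic_one_dimensional_general {n : ℕ} {φ : Fin n → ℤ}
    {A1 A2 l0 m0 : ℝ} (hl0 : l0 ≠ 0) (hm0 : m0 ≠ 0)
    {G : ℝ × ℝ → Matrix (Fin n) (Fin n) ℂ}
    (hG : ∀ b : ℝ × ℝ, IsALSMatrix (Rmat n φ A1 A2 l0 m0 b) (G b)) :
    (∀ (u v : ℝ) (j k : ℤ) (p q : Fin n),
      G (u + j / l0, v + k / m0) p q = G (u, v) p q) ∧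
    (∀ (u c : ℝ) (p q : Fin n),
      G (u, -(l0 / m0) * u + c) p q = G (0, c) p q) := by
  have G_eq_of_phase {b b' : ℝ × ℝ}
      (h : sourcePhase l0 m0 b ≡ sourcePhase l0 m0 b' [PMOD 1]) : G b = G b' :=
    (hG b).unique (Rmat_eq_of_sourcePhase_modEq φ A1 A2 h ▸ hG b')
  refine ⟨fun u v j k p q => congrFun₂ (G_eq_of_phase ?_) p q,
    fun u c p q => congrFun₂ (G_eq_of_phase ?_) p q⟩
  · exact sourcePhase_add_int_div_modEq hl0 hm0 u v j k
  · rw [sourcePhase_neg_slope_mul_add l0 hm0 u c]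

/-- Proposition 2 (periodicity part): assume `l0 ≠ 0`, `m0 ≠ 0`, and that the largest
eigenvalue `λ(b)` of `R(b)` is simple for every `b`.  Let `P(b)` be the orthogonal
spectral projector onto the eigenspace of `λ(b)` (the Hermitian idempotent matrix whose
range is that eigenspace), and let `G(b) = λ(b)·P(b)` be the ALS calibration matrix.
Then each entry `g_{pq}` of `G` is doubly periodic,
`g_{pq}(u + j/l0, v + k/m0) = g_{pq}(u, v)`, and effectively one-dimensional,
`g_{pq}(u, −(l0/m0)u + c) = g_{pq}(0, c)`. -/
theorem ALS_entries_periodic_one_dimensional (n : ℕ) (hn : 2 ≤ n)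
    (φ : Fin n → ℤ) (hφ : StrictMono φ)
    (A1 A2 l0 m0 : ℝ) (hA1 : A1 = 1) (hA2 : 0 < A2) (hA2' : A2 < 1)
    (hl0 : l0 ≠ 0) (hm0 : m0 ≠ 0)
    (hsimple : ∀ b : ℝ × ℝ,
      Module.finrank ℂ
        (eigSpace (Rmat n φ A1 A2 l0 m0 b) ((largestEig (Rmat n φ A1 A2 l0 m0 b) : ℝ) : ℂ))
        = 1)
    (P : ℝ × ℝ → Matrix (Fin n) (Fin n) ℂ)
    (hP : ∀ b : ℝ × ℝ, (P b).IsHermitian ∧ P b * P b = P b ∧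
      LinearMap.range (Matrix.toLin' (P b)) =
        eigSpace (Rmat n φ A1 A2 l0 m0 b) ((largestEig (Rmat n φ A1 A2 l0 m0 b) : ℝ) : ℂ))
    (G : ℝ × ℝ → Matrix (Fin n) (Fin n) ℂ)
    (hG : ∀ b : ℝ × ℝ, G b = ((largestEig (Rmat n φ A1 A2 l0 m0 b) : ℝ) : ℂ) • P b) :
    (∀ (u v : ℝ) (j k : ℤ) (p q : Fin n),
      G (u + j / l0, v + k / m0) p q = G (u, v) p q) ∧
    (∀ (u c : ℝ) (p q : Fin n),
      G (u, -(l0 / m0) * u + c) p q = G (0, c) p q) :=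
  ALS_entries_periodic_one_dimensional_general hl0 hm0 fun b =>
    ⟨P b, ⟨(hP b).2.1, (hP b).1⟩, (hP b).2.2, hG b⟩
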